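/- Let G be a connected {K_{1,3}, Z_2, N}-free graph which contains as an induced subgraph a graph H = H_3({C_{u_6}}), where C_{u_6} is a nonempty clique. Then for each vertex a ∈ V(G) − V(H) with N_G(a) ∩ V(H) ≠ ∅, one of the following holds: (i) G[V(H) ∪ {a}] ∈ ℋ_3; (ii) N_G(a) ∩ V(H) = {u_1, u_i, u_{7−i}} for some i ∈ {2,3} and |C_{u_6}| = 1 (and then G[V(H) ∪ {a}] ∈ ℋ_6); or (iii) N_G(a) ∩ V(H) = {u_4, u_5} (and then G[V(H) ∪ {a}] ∈ ℋ_5). -/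

import Mathlib

open SimpleGraph

def graphOfList (n : ℕ) (E : List (Fin n × Fin n)) : SimpleGraph (Fin n) :=
  SimpleGraph.fromRel (fun a b => (a, b) ∈ E)

/-- The claw `K_{1,3}`, with center `0`. -/
def K13 : SimpleGraph (Fin 4) := graphOfList 4 [(0,1), (0,2), (0,3)]

/-- `Z_k = N_{k,0,0}`: a triangle `0,1,2` together with a path of length `k`
attached at the vertex `2`. -/
def Zgraph (k : ℕ) : SimpleGraph (Fin (k + 3)) :=
  SimpleGraph.fromRel (fun a b =>
    (a.val = 0 ∧ b.val = 1) ∨ (a.val = 0 ∧ b.val = 2) ∨ (a.val = 1 ∧ b.val = 2) ∨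
    (2 ≤ a.val ∧ b.val = a.val + 1))

/-- The net `N = N_{1,1,1}`: a triangle `0,1,2` with pendant vertices `3,4,5`
attached to `0,1,2` respectively. -/
def Ngraph : SimpleGraph (Fin 6) :=
  graphOfList 6 [(0,1), (0,2), (1,2), (0,3), (1,4), (2,5)]

/-- `G` contains `H` as an induced subgraph. -/
def ContainsInduced {V W : Type*} (G : SimpleGraph V) (H : SimpleGraph W) : Prop :=
  Nonempty (H ↪g G)

/-- The graph `H₁ ≅ B_{1,1}` with vertices `s₁,…,s₅` encoded as `0,…,4`;
its expandable vertices are `s₃,s₄,s₅`, i.e. `{2,3,4}`. -/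
def HGraph1 : SimpleGraph (Fin 5) :=
  graphOfList 5 [(0,2), (1,3), (2,3), (2,4), (3,4)]

/-- The graph `H₂` with vertices `t₁,…,t₆` encoded as `0,…,5`;
its expandable vertices are `t₃,t₄`, i.e. `{2,3}`. -/
def HGraph2 : SimpleGraph (Fin 6) :=
  graphOfList 6 [(0,1), (1,2), (1,3), (2,3), (2,4), (3,5), (4,5)]

/-- The graph `H₃` with vertices `u₁,…,u₆` encoded as `0,…,5`;
its expandable vertex is `u₆`, i.e. `{5}`. -/
def HGraph3 : SimpleGraph (Fin 6) :=
  graphOfList 6 [(0,1), (0,2), (1,3), (1,5), (2,4), (2,5), (3,5), (4,5)]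

/-- The graph `H₄` with vertices `v₁,…,v₆` encoded as `0,…,5`;
its expandable vertices are `v₄,v₅,v₆`, i.e. `{3,4,5}`. -/
def HGraph4 : SimpleGraph (Fin 6) :=
  graphOfList 6 [(0,1), (0,5), (1,4), (2,4), (2,5), (3,4), (3,5), (4,5)]

/-- The graph `H₅` with vertices `w₁,…,w₇` encoded as `0,…,6`: the 6-cycle
`w₁w₃w₄w₂w₆w₅w₁` together with `w₇` adjacent to exactly `w₃,w₄,w₅,w₆`;
its expandable vertex is `w₇`, i.e. `{6}`. -/
def HGraph5 : SimpleGraph (Fin 7) :=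
  graphOfList 7 [(0,2), (2,3), (3,1), (1,5), (5,4), (4,0), (6,2), (6,3), (6,4), (6,5)]

/-- The graph `H₆` with vertices `x₁,…,x₇` encoded as `0,…,6`. -/
def HGraph6 : SimpleGraph (Fin 7) :=
  graphOfList 7 [(0,1), (0,2), (0,4), (1,3), (1,5), (2,3), (2,4), (3,5), (4,5), (4,6), (5,6)]

/-- The graph `H₇` with vertices `y₁,…,y₈` encoded as `0,…,7`. -/
def HGraph7 : SimpleGraph (Fin 8) :=
  graphOfList 8 [(0,1), (0,2), (0,4), (1,3), (1,5), (2,3), (2,4), (2,6), (3,5), (3,6),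
    (4,5), (4,7), (5,7), (6,7)]

/-- `G` is obtained (up to isomorphism) from the graph `H` (on `Fin n`) by expanding each
vertex in `U` to a nonempty clique, vertices outside `U` being kept as single vertices.
The map `g` sends each vertex of `G` to the vertex of `H` it arises from: fibers are the
expansion cliques, fibers over non-expandable vertices are singletons, and two distinct
vertices of `G` are adjacent iff they lie in the same fiber or their images are adjacent
in `H`.  (For `U = ∅` this says exactly that `G` is isomorphic to `H`.) -/
def IsExpansionOf {V : Type*} (G : SimpleGraph V) {n : ℕ} (H : SimpleGraph (Fin n))
    (U : Set (Fin n)) : Prop :=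
  ∃ g : V → Fin n, Function.Surjective g ∧
    (∀ i : Fin n, i ∉ U → ∀ u v : V, g u = i → g v = i → u = v) ∧
    (∀ u v : V, G.Adj u v ↔ ((g u = g v ∧ u ≠ v) ∨ H.Adj (g u) (g v)))

/-!
Regard `H = H₃({C_{u₆}})` as a map onto the vertices of `H₃`, and keep only one vertex of the
clique: this gives an induced copy `e` of `H₃`. Forbidding `K_{1,3}` and `Z₂` leaves few traces
of `N(a)` on `e`. If `a` sees `u₁`, the claw at `u₁` forces it to see, up to the reflection of
`H₃`, also `u₂`, and then its trace is exactly `{u₁, u₂, u₅}`. If `a` misses `u₁` but sees `u₂` or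
`u₃`, it sees everything else. Otherwise it sees exactly `u₄` and `u₅`. These traces differ already
away from `u₆`, so the trace does not depend on the chosen clique vertex, and in each case `a` is
either a further copy of `u₆` or the missing vertex of `H₅` or `H₆`. For `H₆` the clique is
a single vertex, as two clique vertices `c, c'` would span a `Z₂` with `u₅, a, u₁`.
-/

instance (n : ℕ) (E : List (Fin n × Fin n)) : DecidableRel (graphOfList n E).Adj :=
  inferInstanceAs (DecidableRel (SimpleGraph.fromRel _).Adj)

instance : DecidableRel HGraph3.Adj := inferInstanceAs (DecidableRel (graphOfList _ _).Adj)

instance : DecidableRel HGraph5.Adj := inferInstanceAs (DecidableRel (graphOfList _ _).Adj)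

instance : DecidableRel HGraph6.Adj := inferInstanceAs (DecidableRel (graphOfList _ _).Adj)

section ForbiddenSubgraphs

variable {V W : Type*} {G : SimpleGraph V} {H : SimpleGraph W}

lemma containsInduced_K13 {p x y z : V} (hpx : G.Adj p x) (hpy : G.Adj p y) (hpz : G.Adj p z)
    (hxy : x ≠ y) (hxz : x ≠ z) (hyz : y ≠ z)
    (nxy : ¬ G.Adj x y) (nxz : ¬ G.Adj x z) (nyz : ¬ G.Adj y z) : ContainsInduced G K13 := by
  have hinj : Function.Injective ![p, x, y, z] := by
    intro i j
    fin_cases i <;> fin_cases j <;> simp [hpx.ne, hpx.ne', hpy.ne, hpy.ne', hpz.ne, hpz.ne', *,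
      hxy.symm, hxz.symm, hyz.symm]
  refine ⟨⟨⟨_, hinj⟩, fun {i j} => ?_⟩⟩
  fin_cases i <;> fin_cases j <;> simp [K13, graphOfList, G.adj_comm, *]

lemma containsInduced_Zgraph_two {p q r s t : V} (hpq : G.Adj p q) (hpr : G.Adj p r)
    (hqr : G.Adj q r) (hrs : G.Adj r s) (hst : G.Adj s t) (nps : ¬ G.Adj p s)
    (nqs : ¬ G.Adj q s) (npt : ¬ G.Adj p t) (nqt : ¬ G.Adj q t) (nrt : ¬ G.Adj r t) :
    ContainsInduced G (Zgraph 2) := by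
  have hadj : ∀ i j, G.Adj (![p, q, r, s, t] i) (![p, q, r, s, t] j) ↔ (Zgraph 2).Adj i j := by
    intro i j
    fin_cases i <;> fin_cases j <;> simp [Zgraph, G.adj_comm, *]
  have hdet : ∀ i j, (∀ k, (Zgraph 2).Adj i k ↔ (Zgraph 2).Adj j k) → i = j := by
    simp only [Zgraph, fromRel_adj]
    decide
  refine ⟨⟨⟨![p, q, r, s, t], fun i j hij => hdet i j fun k => ?_⟩, hadj _ _⟩⟩
  rw [← hadj, ← hadj, hij]

variable (e : H ↪g G) {a : V}

lemma adj_or_adj_of_adj_center (hK13 : ¬ ContainsInduced G K13) (ha : a ∉ Set.range e) (i j k : W)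
    (h : H.Adj i j ∧ H.Adj i k ∧ j ≠ k ∧ ¬ H.Adj j k) (hi : G.Adj a (e i)) :
    G.Adj a (e j) ∨ G.Adj a (e k) := by
  obtain ⟨hij, hik, hne, hjk⟩ := h
  by_contra! hn
  exact hK13 <| containsInduced_K13 (e.map_adj_iff.2 hij) (e.map_adj_iff.2 hik) hi.symm
    (e.injective.ne hne) (fun h => ha ⟨j, h⟩) (fun h => ha ⟨k, h⟩) (mt e.map_adj_iff.1 hjk)
    (mt Adj.symm hn.1) (mt Adj.symm hn.2)

lemma not_adj_of_independent (hK13 : ¬ ContainsInduced G K13) (i j k : W)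
    (h : i ≠ j ∧ i ≠ k ∧ j ≠ k ∧ ¬ H.Adj i j ∧ ¬ H.Adj i k ∧ ¬ H.Adj j k)
    (hi : G.Adj a (e i)) (hj : G.Adj a (e j)) : ¬ G.Adj a (e k) := by
  obtain ⟨dij, dik, djk, nij, nik, njk⟩ := h
  exact fun hk => hK13 <| containsInduced_K13 hi hj hk (e.injective.ne dij) (e.injective.ne dik)
    (e.injective.ne djk) (mt e.map_adj_iff.1 nij) (mt e.map_adj_iff.1 nik)
    (mt e.map_adj_iff.1 njk)

lemma adj_or_adj_of_path (hZ2 : ¬ ContainsInduced G (Zgraph 2)) (q r s t : W)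
    (h : H.Adj q r ∧ H.Adj r s ∧ H.Adj s t ∧ ¬ H.Adj q s ∧ ¬ H.Adj q t ∧ ¬ H.Adj r t)
    (hq : G.Adj a (e q)) (hr : G.Adj a (e r)) : G.Adj a (e s) ∨ G.Adj a (e t) := by
  obtain ⟨hqr, hrs, hst, nqs, nqt, nrt⟩ := h
  by_contra! hn
  exact hZ2 <| containsInduced_Zgraph_two hq hr (e.map_adj_iff.2 hqr) (e.map_adj_iff.2 hrs)
    (e.map_adj_iff.2 hst) hn.1 (mt e.map_adj_iff.1 nqs) hn.2 (mt e.map_adj_iff.1 nqt)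
    (mt e.map_adj_iff.1 nrt)

lemma adj_of_two_edges (hZ2 : ¬ ContainsInduced G (Zgraph 2)) (p q s t : W)
    (h : H.Adj p q ∧ H.Adj s t ∧ ¬ H.Adj p s ∧ ¬ H.Adj q s ∧ ¬ H.Adj p t ∧ ¬ H.Adj q t)
    (hp : G.Adj a (e p)) (hq : G.Adj a (e q)) (hs : G.Adj a (e s)) : G.Adj a (e t) := by
  obtain ⟨hpq, hst, nps, nqs, npt, nqt⟩ := h
  by_contra hn
  exact hZ2 <| containsInduced_Zgraph_two (e.map_adj_iff.2 hpq) hp.symm hq.symm hs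
    (e.map_adj_iff.2 hst) (mt e.map_adj_iff.1 nps) (mt e.map_adj_iff.1 nqs)
    (mt e.map_adj_iff.1 npt) (mt e.map_adj_iff.1 nqt) hn

lemma adj_or_adj_or_adj_of_paw (hZ2 : ¬ ContainsInduced G (Zgraph 2)) (p q r s : W)
    (h : H.Adj p q ∧ H.Adj p r ∧ H.Adj q r ∧ H.Adj r s ∧ ¬ H.Adj p s ∧ ¬ H.Adj q s)
    (hs : G.Adj a (e s)) : G.Adj a (e p) ∨ G.Adj a (e q) ∨ G.Adj a (e r) := by
  obtain ⟨hpq, hpr, hqr, hrs, nps, nqs⟩ := h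
  by_contra! hn
  exact hZ2 <| containsInduced_Zgraph_two (e.map_adj_iff.2 hpq) (e.map_adj_iff.2 hpr)
    (e.map_adj_iff.2 hqr) (e.map_adj_iff.2 hrs) hs.symm (mt e.map_adj_iff.1 nps)
    (mt e.map_adj_iff.1 nqs) (mt Adj.symm hn.1) (mt Adj.symm hn.2.1) (mt Adj.symm hn.2.2)

end ForbiddenSubgraphs

namespace HGraph3

/-- The reflection of `H₃`, exchanging `u₂` with `u₃` and `u₄` with `u₅`. -/
def reflection : HGraph3 ≃g HGraph3 where
  toEquiv := Equiv.swap 1 2 * Equiv.swap 3 4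
  map_rel_iff' {i j} := by revert i j; decide

/-- The possible traces, on an induced copy of `H₃`, of the neighborhood of an outside vertex in a
`{K_{1,3}, Z₂}`-free graph. Vertex `u_i` is encoded as `i - 1`. -/
def traces : Finset (Finset (Fin 6)) :=
  {{1, 2, 3, 4, 5}, {0, 1, 4}, {0, 2, 3}, {3, 4}}

/-- The embedding of `H₃` into `H₅` which misses only the vertex `w₂`. -/
def embeddingHGraph5 : HGraph3 ↪g HGraph5 where
  toFun := ![0, 2, 4, 3, 5, 6]
  inj' := by decide
  map_rel_iff' {i j} := by revert i j; decide

/-- The embedding of `H₃` into `H₆` which misses only the vertex `x₃`. -/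
def embeddingHGraph6 : HGraph3 ↪g HGraph6 where
  toFun := ![0, 4, 1, 6, 3, 5]
  inj' := by decide
  map_rel_iff' {i j} := by revert i j; decide

lemma erase_nonempty_of_mem_traces : ∀ T ∈ traces, (T.erase 5).Nonempty := by decide

lemma eq_of_erase_eq_of_mem_traces :
    ∀ T ∈ traces, ∀ T' ∈ traces, T.erase 5 = T'.erase 5 → T = T' := by
  simp only [traces, Finset.forall_mem_insert, Finset.mem_singleton, forall_eq]
  decide

variable {V : Type*} {G : SimpleGraph V} (hK13 : ¬ ContainsInduced G K13)
  (hZ2 : ¬ ContainsInduced G (Zgraph 2)) (e : HGraph3 ↪g G) {a : V} (ha : a ∉ Set.range e)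

include hK13 hZ2 ha

lemma adj_iff_of_adj_zero_of_adj_one (h0 : G.Adj a (e 0)) (h1 : G.Adj a (e 1)) (i : Fin 6) :
    G.Adj a (e i) ↔ i ∈ ({0, 1, 4} : Finset (Fin 6)) := by
  have h34 : G.Adj a (e 3) → ¬ G.Adj a (e 4) :=
    not_adj_of_independent e hK13 0 3 4 (by decide) h0
  have h2 : ¬ G.Adj a (e 2) := by
    intro h2
    have h3 : ¬ G.Adj a (e 3) := fun h3 =>
      h34 h3 (adj_of_two_edges e hZ2 1 3 2 4 (by decide) h1 h3 h2)
    have h4 : ¬ G.Adj a (e 4) := fun h4 =>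
      h3 (adj_of_two_edges e hZ2 2 4 1 3 (by decide) h2 h4 h1)
    have h5 : G.Adj a (e 5) :=
      (adj_or_adj_of_path e hZ2 0 1 5 4 (by decide) h0 h1).resolve_right h4
    exact (adj_or_adj_of_adj_center e hK13 ha 5 3 4 (by decide) h5).elim h3 h4
  have h4 : G.Adj a (e 4) := (adj_or_adj_of_path e hZ2 1 0 2 4 (by decide) h1 h0).resolve_left h2
  have h3 : ¬ G.Adj a (e 3) := fun h3 => h34 h3 h4
  have h5 : ¬ G.Adj a (e 5) := fun h5 =>
    (adj_or_adj_of_adj_center e hK13 ha 5 2 3 (by decide) h5).elim h2 h3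
  fin_cases i <;> simp [h0, h1, h2, h3, h4, h5]

lemma adj_iff_of_adj_zero (h0 : G.Adj a (e 0)) :
    (∀ i, G.Adj a (e i) ↔ i ∈ ({0, 1, 4} : Finset (Fin 6))) ∨
      ∀ i, G.Adj a (e i) ↔ i ∈ ({0, 2, 3} : Finset (Fin 6)) := by
  obtain h1 | h2 := adj_or_adj_of_adj_center e hK13 ha 0 1 2 (by decide) h0
  · exact .inl (adj_iff_of_adj_zero_of_adj_one hK13 hZ2 e ha h0 h1)
  · have h := adj_iff_of_adj_zero_of_adj_one hK13 hZ2 (reflection.toEmbedding.trans e)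
      (by rintro ⟨i, rfl⟩; exact ha ⟨_, rfl⟩) h0 h2
    refine .inr fun i => ?_
    obtain ⟨j, rfl⟩ := reflection.surjective i
    exact (h j).trans (by revert j; decide)

lemma adj_of_not_adj_zero_of_adj_one (h0 : ¬ G.Adj a (e 0)) (h1 : G.Adj a (e 1)) :
    G.Adj a (e 2) ∧ G.Adj a (e 3) ∧ G.Adj a (e 5) := by
  have h3 := (adj_or_adj_of_adj_center e hK13 ha 1 0 3 (by decide) h1).resolve_left h0
  have h5 := (adj_or_adj_of_adj_center e hK13 ha 1 0 5 (by decide) h1).resolve_left h0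
  exact ⟨(adj_or_adj_of_path e hZ2 3 1 0 2 (by decide) h3 h1).resolve_left h0, h3, h5⟩

lemma adj_iff_of_not_adj_zero_of_adj (h0 : ¬ G.Adj a (e 0)) (h : G.Adj a (e 1) ∨ G.Adj a (e 2))
    (i : Fin 6) : G.Adj a (e i) ↔ i ∈ ({1, 2, 3, 4, 5} : Finset (Fin 6)) := by
  have left := adj_of_not_adj_zero_of_adj_one hK13 hZ2 e ha h0
  have right : G.Adj a (e 2) → G.Adj a (e 1) ∧ G.Adj a (e 4) ∧ G.Adj a (e 5) :=
    adj_of_not_adj_zero_of_adj_one hK13 hZ2 (reflection.toEmbedding.trans e)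
      (by rintro ⟨i, rfl⟩; exact ha ⟨_, rfl⟩) h0
  have h1 : G.Adj a (e 1) := h.elim id fun h2 => (right h2).1
  obtain ⟨h2, h3, h5⟩ := left h1
  have h4 := (right h2).2.1
  fin_cases i <;> simp [h0, h1, h2, h3, h4, h5]

lemma adj_iff_of_not_adj (h0 : ¬ G.Adj a (e 0)) (h1 : ¬ G.Adj a (e 1)) (h2 : ¬ G.Adj a (e 2))
    (h : ∃ i, G.Adj a (e i)) (i : Fin 6) :
    G.Adj a (e i) ↔ i ∈ ({3, 4} : Finset (Fin 6)) := by
  have h5 : ¬ G.Adj a (e 5) := fun h5 =>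
    (adj_or_adj_of_adj_center e hK13 ha 5 1 2 (by decide) h5).elim h1 h2
  have h43 : G.Adj a (e 4) → G.Adj a (e 3) := fun h4 => by
    simpa [h1, h5] using adj_or_adj_or_adj_of_paw e hZ2 1 3 5 4 (by decide) h4
  have h34 : G.Adj a (e 3) → G.Adj a (e 4) := fun h3 => by
    simpa [h2, h5] using adj_or_adj_or_adj_of_paw e hZ2 2 4 5 3 (by decide) h3
  have h34' : G.Adj a (e 3) ∨ G.Adj a (e 4) := by
    simpa [Fin.exists_fin_succ, h0, h1, h2, h5] using h
  have h3 : G.Adj a (e 3) := h34'.elim id h43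
  have h4 := h34 h3
  fin_cases i <;> simp [h0, h1, h2, h3, h4, h5]

theorem exists_mem_traces (h : ∃ i, G.Adj a (e i)) :
    ∃ T ∈ traces, ∀ i, G.Adj a (e i) ↔ i ∈ T := by
  by_cases h0 : G.Adj a (e 0)
  · obtain h | h := adj_iff_of_adj_zero hK13 hZ2 e ha h0
    · exact ⟨_, by decide, h⟩
    · exact ⟨_, by decide, h⟩
  by_cases h12 : G.Adj a (e 1) ∨ G.Adj a (e 2)
  · exact ⟨_, by decide, adj_iff_of_not_adj_zero_of_adj hK13 hZ2 e ha h0 h12⟩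
  · obtain ⟨h1, h2⟩ := not_or.1 h12
    exact ⟨_, by decide, adj_iff_of_not_adj hK13 hZ2 e ha h0 h1 h2 h⟩

end HGraph3

/-- The map `f` exhibits `G[S]` as the graph obtained from `H` by expanding the vertices in `U` to
nonempty cliques. This is the notion of `IsExpansionOf` with `f` made explicit; `f` is defined on
all of `V`, with irrelevant values outside `S`, so that `S` can be enlarged. -/
structure IsExpansionMapOn {V W : Type*} (G : SimpleGraph V) (S : Set V) (H : SimpleGraph W)
    (U : Set W) (f : V → W) : Prop where
  surjOn : Set.SurjOn f S Set.univ
  eq_of_map_eq : ∀ ⦃x⦄, x ∈ S → ∀ ⦃y⦄, y ∈ S → f x = f y → f x ∉ U → x = y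
  adj_iff : ∀ ⦃x⦄, x ∈ S → ∀ ⦃y⦄, y ∈ S →
    (G.Adj x y ↔ (f x = f y ∧ x ≠ y) ∨ H.Adj (f x) (f y))

namespace IsExpansionMapOn

section General

variable {V W W' : Type*} {G : SimpleGraph V} {S : Set V} {H : SimpleGraph W}
  {H' : SimpleGraph W'} {U : Set W} {U' : Set W'} {f : V → W}

lemma isExpansionOf {n : ℕ} {H : SimpleGraph (Fin n)} {U : Set (Fin n)} {f : V → Fin n}
    (hf : IsExpansionMapOn G S H U f) : IsExpansionOf (G.induce S) H U := by
  refine ⟨fun x => f x, fun i => ?_, ?_, fun x y => ?_⟩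
  · obtain ⟨x, hx, rfl⟩ := hf.surjOn (Set.mem_univ i)
    exact ⟨⟨x, hx⟩, rfl⟩
  · rintro _ hU x y rfl hxy
    exact Subtype.ext (hf.eq_of_map_eq x.2 y.2 hxy.symm hU)
  · simpa [Subtype.ext_iff] using hf.adj_iff x.2 y.2

lemma nonempty_iso (hf : IsExpansionMapOn G S H ∅ f) : Nonempty (G.induce S ≃g H) := by
  have hbij : Set.BijOn f S Set.univ :=
    ⟨Set.mapsTo_univ f S, fun x hx y hy h => hf.eq_of_map_eq hx hy h (Set.notMem_empty _),
      hf.surjOn⟩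
  refine ⟨⟨(hbij.equiv f).trans (Equiv.Set.univ W), fun {x y} => ?_⟩⟩
  have hxy : ¬ (f x = f y ∧ x.1 ≠ y.1) := fun h => h.2 (hbij.injOn x.2 y.2 h.1)
  exact ((hf.adj_iff x.2 y.2).trans (or_iff_right hxy)).symm

lemma adj_iff_of_ne (hf : IsExpansionMapOn G S H U f) {x y : V} {i j : W} (hx : x ∈ S)
    (hy : y ∈ S) (hi : f x = i) (hj : f y = j) (hij : i ≠ j) : G.Adj x y ↔ H.Adj i j := by
  subst hi hj
  rw [hf.adj_iff hx hy, or_iff_right fun h => hij h.1]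

lemma iso_comp (hf : IsExpansionMapOn G S H U f) (φ : H ≃g H') :
    IsExpansionMapOn G S H' (φ '' U) (φ ∘ f) where
  surjOn w _ := by
    obtain ⟨x, hx, hfx⟩ := hf.surjOn (Set.mem_univ (φ.symm w))
    exact ⟨x, hx, by simp [hfx]⟩
  eq_of_map_eq x hx y hy hxy hU :=
    hf.eq_of_map_eq hx hy (φ.injective hxy) fun h => hU (Set.mem_image_of_mem φ h)
  adj_iff x hx y hy := by simpa [φ.map_adj_iff] using hf.adj_iff hx hy

lemma of_subsingleton (hf : IsExpansionMapOn G S H U f)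
    (hU : ∀ i ∈ U, (S ∩ f ⁻¹' {i}).Subsingleton) : IsExpansionMapOn G S H ∅ f where
  surjOn := hf.surjOn
  eq_of_map_eq x hx y hy hxy _ := by
    by_cases h : f x ∈ U
    · exact hU _ h ⟨hx, rfl⟩ ⟨hy, hxy.symm⟩
    · exact hf.eq_of_map_eq hx hy hxy h
  adj_iff := hf.adj_iff

lemma exists_embedding (hf : IsExpansionMapOn G S H U f) {c : V} (hc : c ∈ S) :
    ∃ e : H ↪g G, (∀ i, e i ∈ S) ∧ (∀ i, f (e i) = i) ∧ e (f c) = c := by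
  classical
  choose s hsS hs using fun i => hf.surjOn (Set.mem_univ i)
  let t : W → V := Function.update s (f c) c
  have htS : ∀ i, t i ∈ S := fun i => by by_cases h : i = f c <;> simp [t, h, hc, hsS]
  have ht : ∀ i, f (t i) = i := fun i => by by_cases h : i = f c <;> simp [t, h, hs]
  refine ⟨⟨⟨t, Function.LeftInverse.injective ht⟩, fun {i j} => ?_⟩, htS, ht, by simp [t]⟩
  have hij : ¬ (i = j ∧ t i ≠ t j) := fun h => h.2 (congrArg t h.1)
  simpa [ht, hij] using hf.adj_iff (htS i) (htS j)

lemma insert_vertex [DecidableEq V] (hf : IsExpansionMapOn G S H U f) {a : V} (ha : a ∉ S)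
    (φ : H ↪g H') (w : W') (hU : Set.MapsTo φ U U') (hcover : ∀ j, j = w ∨ j ∈ Set.range φ)
    (hw : w ∉ Set.range φ ∨ w ∈ U')
    (hadj : ∀ x ∈ S, G.Adj a x ↔ φ (f x) = w ∨ H'.Adj (φ (f x)) w) :
    IsExpansionMapOn G (insert a S) H' U' (Function.update (φ ∘ f) a w) := by
  have ga : Function.update (φ ∘ f) a w a = w := Function.update_self ..
  have gS : ∀ x ∈ S, Function.update (φ ∘ f) a w x = φ (f x) := fun x hx =>
    Function.update_of_ne (ne_of_mem_of_not_mem hx ha) ..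
  have hwU : ∀ i, φ i = w → w ∈ U' := fun i hi => hw.resolve_left fun h => h ⟨i, hi⟩
  refine ⟨fun j _ => ?_, ?_, ?_⟩
  · obtain rfl | ⟨i, rfl⟩ := hcover j
    · exact ⟨a, Set.mem_insert a S, ga⟩
    · obtain ⟨x, hx, rfl⟩ := hf.surjOn (Set.mem_univ i)
      exact ⟨x, Set.mem_insert_of_mem a hx, gS x hx⟩
  · rintro x (rfl | hx) y (rfl | hy)
    · exact fun _ _ => rfl
    · rw [ga, gS y hy]
      exact fun h hU' => (hU' (hwU _ h.symm)).elim
    · rw [ga, gS x hx]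
      exact fun h hU' => (hU' (h ▸ hwU _ h)).elim
    · rw [gS x hx, gS y hy]
      exact fun h hU' => hf.eq_of_map_eq hx hy (φ.injective h) fun h' => hU' (hU h')
  · rintro x (rfl | hx) y (rfl | hy)
    · simp
    · rw [ga, gS y hy, hadj y hy, and_iff_left (ne_of_mem_of_not_mem hy ha).symm, eq_comm,
        H'.adj_comm]
    · rw [ga, gS x hx, G.adj_comm, hadj x hx, and_iff_left (ne_of_mem_of_not_mem hx ha)]
    · rw [gS x hx, gS y hy, φ.map_adj_iff, φ.injective.eq_iff, hf.adj_iff hx hy]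

end General

section HGraph3

variable {V : Type*} {G : SimpleGraph V} {S : Set V} {f : V → Fin 6} {a : V}
  (hf : IsExpansionMapOn G S HGraph3 {5} f)

include hf

lemma comp_reflection : IsExpansionMapOn G S HGraph3 {5} (HGraph3.reflection ∘ f) := by
  have h5 : HGraph3.reflection 5 = 5 := by decide
  simpa [h5] using hf.iso_comp HGraph3.reflection

lemma exists_mem_traces (hK13 : ¬ ContainsInduced G K13) (hZ2 : ¬ ContainsInduced G (Zgraph 2))
    (ha : a ∉ S) (hnbr : ∃ b ∈ S, G.Adj a b) :
    ∃ T ∈ HGraph3.traces, ∀ x ∈ S, G.Adj a x ↔ f x ∈ T := by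
  have ha' : ∀ e : HGraph3 ↪g G, (∀ i, e i ∈ S) → a ∉ Set.range e := by
    rintro e he ⟨i, rfl⟩
    exact ha (he i)
  obtain ⟨b, hb, hab⟩ := hnbr
  obtain ⟨e, heS, hfe, heb⟩ := hf.exists_embedding hb
  obtain ⟨T, hT, hTe⟩ := HGraph3.exists_mem_traces hK13 hZ2 e (ha' e heS) ⟨f b, by rwa [heb]⟩
  refine ⟨T, hT, fun x hx => ?_⟩
  obtain ⟨e', heS', hfe', hex⟩ := hf.exists_embedding hx
  have agree : ∀ i ≠ 5, e' i = e i := fun i hi =>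
    hf.eq_of_map_eq (heS' i) (heS i) (by rw [hfe, hfe']) (by simpa [hfe'] using hi)
  obtain ⟨i, hi⟩ := HGraph3.erase_nonempty_of_mem_traces T hT
  obtain ⟨hi5, hiT⟩ := Finset.mem_erase.1 hi
  obtain ⟨T', hT', hTe'⟩ := HGraph3.exists_mem_traces hK13 hZ2 e' (ha' e' heS')
    ⟨i, by rwa [agree i hi5, hTe]⟩
  have hTT' : T' = T := by
    refine HGraph3.eq_of_erase_eq_of_mem_traces T' hT' T hT (Finset.ext fun i => ?_)
    simp only [Finset.mem_erase]
    exact and_congr_right fun hi => by rw [← hTe', ← hTe, agree i hi]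
  rw [← hTT', ← hTe', hex]

lemma isExpansionOf_insert_HGraph3 (ha : a ∉ S)
    (hadj : ∀ x ∈ S, G.Adj a x ↔ f x ∈ ({1, 2, 3, 4, 5} : Finset (Fin 6))) :
    IsExpansionOf (G.induce (insert a S)) HGraph3 {5} := by
  classical
  refine (hf.insert_vertex ha Embedding.refl 5 (Set.mapsTo_id _) (by simp) (.inr rfl)
    fun x hx => (hadj x hx).trans ?_).isExpansionOf
  generalize f x = i
  revert i
  decide

lemma isExpansionOf_insert_HGraph5 (ha : a ∉ S)
    (hadj : ∀ x ∈ S, G.Adj a x ↔ f x ∈ ({3, 4} : Finset (Fin 6))) :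
    IsExpansionOf (G.induce (insert a S)) HGraph5 {6} := by
  classical
  refine (hf.insert_vertex ha HGraph3.embeddingHGraph5 1 (by simp [HGraph3.embeddingHGraph5])
    (by decide) (.inl (by decide)) fun x hx => (hadj x hx).trans ?_).isExpansionOf
  generalize f x = i
  revert i
  decide

lemma subsingleton_preimage_five (hZ2 : ¬ ContainsInduced G (Zgraph 2))
    (hadj : ∀ x ∈ S, G.Adj a x ↔ f x ∈ ({0, 1, 4} : Finset (Fin 6))) :
    (S ∩ f ⁻¹' {5}).Subsingleton := by
  rintro c ⟨hc, hfc : f c = 5⟩ c' ⟨hc', hfc' : f c' = 5⟩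
  by_contra hne
  obtain ⟨x, hx, hfx⟩ := hf.surjOn (Set.mem_univ 4)
  obtain ⟨y, hy, hfy⟩ := hf.surjOn (Set.mem_univ 0)
  exact hZ2 <| containsInduced_Zgraph_two (p := c) (q := c') (r := x) (s := a) (t := y)
    ((hf.adj_iff hc hc').2 (.inl ⟨hfc.trans hfc'.symm, hne⟩))
    ((hf.adj_iff_of_ne hc hx hfc hfx (by decide)).2 (by decide))
    ((hf.adj_iff_of_ne hc' hx hfc' hfx (by decide)).2 (by decide))
    (by simp [G.adj_comm x, hadj x hx, hfx])
    (by simp [hadj y hy, hfy])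
    (by simp [G.adj_comm c, hadj c hc, hfc])
    (by simp [G.adj_comm c', hadj c' hc', hfc'])
    (mt (hf.adj_iff_of_ne hc hy hfc hfy (by decide)).1 (by decide))
    (mt (hf.adj_iff_of_ne hc' hy hfc' hfy (by decide)).1 (by decide))
    (mt (hf.adj_iff_of_ne hx hy hfx hfy (by decide)).1 (by decide))

lemma nonempty_iso_insert_HGraph6 (ha : a ∉ S) (h5 : (S ∩ f ⁻¹' {5}).Subsingleton)
    (hadj : ∀ x ∈ S, G.Adj a x ↔ f x ∈ ({0, 1, 4} : Finset (Fin 6))) :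
    Nonempty (G.induce (insert a S) ≃g HGraph6) := by
  classical
  refine ((hf.of_subsingleton (by simpa using h5)).insert_vertex ha HGraph3.embeddingHGraph6 2
    (Set.mapsTo_empty _ _) (by decide) (.inl (by decide))
    fun x hx => (hadj x hx).trans ?_).nonempty_iso
  generalize f x = i
  revert i
  decide

theorem insert_cases (hK13 : ¬ ContainsInduced G K13) (hZ2 : ¬ ContainsInduced G (Zgraph 2))
    (ha : a ∉ S) (hnbr : ∃ b ∈ S, G.Adj a b) :
    IsExpansionOf (G.induce (insert a S)) HGraph3 {5} ∨
    ((∀ x ∈ S, G.Adj a x ↔ f x ∈ ({0, 1, 4} : Finset (Fin 6))) ∧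
      (S ∩ f ⁻¹' {5}).Subsingleton ∧ Nonempty (G.induce (insert a S) ≃g HGraph6)) ∨
    ((∀ x ∈ S, G.Adj a x ↔ f x ∈ ({0, 2, 3} : Finset (Fin 6))) ∧
      (S ∩ f ⁻¹' {5}).Subsingleton ∧ Nonempty (G.induce (insert a S) ≃g HGraph6)) ∨
    ((∀ x ∈ S, G.Adj a x ↔ f x ∈ ({3, 4} : Finset (Fin 6))) ∧
      IsExpansionOf (G.induce (insert a S)) HGraph5 {6}) := by
  obtain ⟨T, hT, hadj⟩ := hf.exists_mem_traces hK13 hZ2 ha hnbr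
  simp only [HGraph3.traces, Finset.mem_insert, Finset.mem_singleton] at hT
  obtain rfl | rfl | rfl | rfl := hT
  · exact .inl (hf.isExpansionOf_insert_HGraph3 ha hadj)
  · have h5 := hf.subsingleton_preimage_five hZ2 hadj
    exact .inr (.inl ⟨hadj, h5, hf.nonempty_iso_insert_HGraph6 ha h5 hadj⟩)
  · have hf' := hf.comp_reflection
    have hadj' : ∀ x ∈ S, G.Adj a x ↔
        (HGraph3.reflection ∘ f) x ∈ ({0, 1, 4} : Finset (Fin 6)) := fun x hx =>
      (hadj x hx).trans ((by decide : ∀ i, i ∈ ({0, 2, 3} : Finset (Fin 6)) ↔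
        HGraph3.reflection i ∈ ({0, 1, 4} : Finset (Fin 6))) (f x))
    have h5' := hf'.subsingleton_preimage_five hZ2 hadj'
    have h5 : (S ∩ f ⁻¹' {5}).Subsingleton :=
      h5'.anti fun x ⟨hx, hfx⟩ => ⟨hx, by rw [Set.mem_preimage, Function.comp, hfx]; decide⟩
    exact .inr (.inr (.inl ⟨hadj, h5, hf'.nonempty_iso_insert_HGraph6 ha h5' hadj'⟩))
  · exact .inr (.inr (.inr ⟨hadj, hf.isExpansionOf_insert_HGraph5 ha hadj⟩))

end HGraph3

end IsExpansionMapOn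

/-- On the vertex set of `H₃({D6})`, the map `f` sends `u_i` to `i - 1` and exactly the clique `D6`
to `5`, following the encoding of `HGraph3`. -/
def IsLabeling {V : Type*} (u1 u2 u3 u4 u5 : V) (D6 : Set V) (f : V → Fin 6) : Prop :=
  ∀ x ∈ ({u1, u2, u3, u4, u5} ∪ D6 : Set V), (x = u1 ↔ f x = 0) ∧ (x = u2 ↔ f x = 1) ∧
    (x = u3 ↔ f x = 2) ∧ (x = u4 ↔ f x = 3) ∧ (x = u5 ↔ f x = 4) ∧ (x ∈ D6 ↔ f x = 5)

section Labeling

variable {V : Type*} {G : SimpleGraph V} {u1 u2 u3 u4 u5 : V} {D6 : Set V}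

lemma exists_isLabeling (hus : List.Pairwise (· ≠ ·) [u1, u2, u3, u4, u5])
    (hu1 : u1 ∉ D6) (hu2 : u2 ∉ D6) (hu3 : u3 ∉ D6) (hu4 : u4 ∉ D6) (hu5 : u5 ∉ D6) :
    ∃ f, IsLabeling u1 u2 u3 u4 u5 D6 f := by
  classical
  refine ⟨fun x => if x = u1 then 0 else if x = u2 then 1 else if x = u3 then 2 else
    if x = u4 then 3 else if x = u5 then 4 else 5, fun x hx => ?_⟩
  simp only [List.pairwise_cons, List.mem_cons, List.not_mem_nil, or_false, forall_eq_or_imp,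
    forall_eq] at hus
  simp only [Set.mem_union, Set.mem_insert_iff, Set.mem_singleton_iff] at hx
  grind

lemma IsLabeling.isExpansionMapOn {f : V → Fin 6} (hf : IsLabeling u1 u2 u3 u4 u5 D6 f)
    (hne6 : D6.Nonempty)
    (hind : ∀ u ∈ ({u1, u2, u3, u4, u5} ∪ D6 : Set V),
      ∀ v ∈ ({u1, u2, u3, u4, u5} ∪ D6 : Set V), u ≠ v →
      (G.Adj u v ↔
        (u = u1 ∧ v = u2) ∨ (v = u1 ∧ u = u2) ∨
        (u = u1 ∧ v = u3) ∨ (v = u1 ∧ u = u3) ∨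
        (u = u2 ∧ v = u4) ∨ (v = u2 ∧ u = u4) ∨
        (u = u2 ∧ v ∈ D6) ∨ (v = u2 ∧ u ∈ D6) ∨
        (u = u3 ∧ v = u5) ∨ (v = u3 ∧ u = u5) ∨
        (u = u3 ∧ v ∈ D6) ∨ (v = u3 ∧ u ∈ D6) ∨
        (u = u4 ∧ v ∈ D6) ∨ (v = u4 ∧ u ∈ D6) ∨
        (u = u5 ∧ v ∈ D6) ∨ (v = u5 ∧ u ∈ D6) ∨
        (u ∈ D6 ∧ v ∈ D6))) :
    IsExpansionMapOn G ({u1, u2, u3, u4, u5} ∪ D6) HGraph3 {5} f := by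
  have hinj : ∀ x ∈ ({u1, u2, u3, u4, u5} ∪ D6 : Set V),
      ∀ y ∈ ({u1, u2, u3, u4, u5} ∪ D6 : Set V), f x = f y → f x ≠ 5 → x = y := by
    intro x hx y hy hxy h5
    have := hf x hx
    have := hf y hy
    grind
  refine ⟨fun i _ => ?_, hinj, fun x hx y hy => ?_⟩
  · obtain ⟨c, hc⟩ := hne6
    fin_cases i
    exacts [⟨u1, by simp, (hf u1 (by simp)).1.1 rfl⟩, ⟨u2, by simp, (hf u2 (by simp)).2.1.1 rfl⟩,
      ⟨u3, by simp, (hf u3 (by simp)).2.2.1.1 rfl⟩, ⟨u4, by simp, (hf u4 (by simp)).2.2.2.1.1 rfl⟩,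
      ⟨u5, by simp, (hf u5 (by simp)).2.2.2.2.1.1 rfl⟩,
      ⟨c, .inr hc, (hf c (.inr hc)).2.2.2.2.2.1 hc⟩]
  · obtain rfl | hxy := eq_or_ne x y
    · simp
    have hfiber : f x = f y ∧ x ≠ y ↔ f x = 5 ∧ f y = 5 := by
      have := hinj x hx y hy
      grind
    obtain ⟨hx1, hx2, hx3, hx4, hx5, hx6⟩ := hf x hx
    obtain ⟨hy1, hy2, hy3, hy4, hy5, hy6⟩ := hf y hy
    rw [hind x hx y hy hxy, hfiber, hx1, hx2, hx3, hx4, hx5, hx6, hy1, hy2, hy3, hy4, hy5, hy6]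
    generalize f x = i, f y = j
    revert i j
    decide

end Labeling

theorem stmt7_general {V : Type*} (G : SimpleGraph V)
    (hK13 : ¬ ContainsInduced G K13) (hZ2 : ¬ ContainsInduced G (Zgraph 2))
    (u1 u2 u3 u4 u5 : V) (D6 : Set V)
    (hus : List.Pairwise (· ≠ ·) [u1, u2, u3, u4, u5])
    (hne6 : D6.Nonempty)
    (hu1 : u1 ∉ D6) (hu2 : u2 ∉ D6) (hu3 : u3 ∉ D6) (hu4 : u4 ∉ D6) (hu5 : u5 ∉ D6)
    (hind : ∀ u ∈ ({u1, u2, u3, u4, u5} ∪ D6 : Set V),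
      ∀ v ∈ ({u1, u2, u3, u4, u5} ∪ D6 : Set V), u ≠ v →
      (G.Adj u v ↔
        (u = u1 ∧ v = u2) ∨ (v = u1 ∧ u = u2) ∨
        (u = u1 ∧ v = u3) ∨ (v = u1 ∧ u = u3) ∨
        (u = u2 ∧ v = u4) ∨ (v = u2 ∧ u = u4) ∨
        (u = u2 ∧ v ∈ D6) ∨ (v = u2 ∧ u ∈ D6) ∨
        (u = u3 ∧ v = u5) ∨ (v = u3 ∧ u = u5) ∨
        (u = u3 ∧ v ∈ D6) ∨ (v = u3 ∧ u ∈ D6) ∨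
        (u = u4 ∧ v ∈ D6) ∨ (v = u4 ∧ u ∈ D6) ∨
        (u = u5 ∧ v ∈ D6) ∨ (v = u5 ∧ u ∈ D6) ∨
        (u ∈ D6 ∧ v ∈ D6)))
    (a : V) (ha : a ∉ ({u1, u2, u3, u4, u5} ∪ D6 : Set V))
    (hnbr : ∃ b ∈ ({u1, u2, u3, u4, u5} ∪ D6 : Set V), G.Adj a b) :
    IsExpansionOf (G.induce (({u1, u2, u3, u4, u5} ∪ D6 : Set V) ∪ {a})) HGraph3 {5} ∨
    ((∀ x ∈ ({u1, u2, u3, u4, u5} ∪ D6 : Set V), G.Adj a x ↔ (x = u1 ∨ x = u2 ∨ x = u5)) ∧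
      (∃ c, D6 = {c}) ∧
      Nonempty ((G.induce (({u1, u2, u3, u4, u5} ∪ D6 : Set V) ∪ {a})) ≃g HGraph6)) ∨
    ((∀ x ∈ ({u1, u2, u3, u4, u5} ∪ D6 : Set V), G.Adj a x ↔ (x = u1 ∨ x = u3 ∨ x = u4)) ∧
      (∃ c, D6 = {c}) ∧
      Nonempty ((G.induce (({u1, u2, u3, u4, u5} ∪ D6 : Set V) ∪ {a})) ≃g HGraph6)) ∨
    ((∀ x ∈ ({u1, u2, u3, u4, u5} ∪ D6 : Set V), G.Adj a x ↔ (x = u4 ∨ x = u5)) ∧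
      IsExpansionOf (G.induce (({u1, u2, u3, u4, u5} ∪ D6 : Set V) ∪ {a})) HGraph5 {6}) := by
  obtain ⟨f, hlabel⟩ := exists_isLabeling hus hu1 hu2 hu3 hu4 hu5
  have hf := hlabel.isExpansionMapOn hne6 hind
  have hD6 : (({u1, u2, u3, u4, u5} ∪ D6 : Set V) ∩ f ⁻¹' {5}).Subsingleton → ∃ c, D6 = {c} :=
    fun h => hne6.imp fun c hc => Set.Subsingleton.eq_singleton_of_mem
      (h.anti fun x hx => ⟨.inr hx, (hlabel x (.inr hx)).2.2.2.2.2.1 hx⟩) hc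
  rw [Set.union_singleton]
  refine (hf.insert_cases hK13 hZ2 ha hnbr).imp_right (Or.imp ?_ (Or.imp ?_ ?_))
  · rintro ⟨hadj, h5, hiso⟩
    exact ⟨fun x hx => by simp [hadj x hx, hlabel x hx], hD6 h5, hiso⟩
  · rintro ⟨hadj, h5, hiso⟩
    exact ⟨fun x hx => by simp [hadj x hx, hlabel x hx], hD6 h5, hiso⟩
  · rintro ⟨hadj, hexp⟩
    exact ⟨fun x hx => by simp [hadj x hx, hlabel x hx], hexp⟩

/-- **Lemma 2.4 (Statement 7).** Let `G` be a connected `{K_{1,3}, Z₂, N}`-free graph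
containing an induced subgraph `H = H₃({C_{u₆}})`, where `D6` is a nonempty clique playing
the role of `C_{u₆}` (here `V(H) = {u₁,…,u₅} ∪ D6`, with the adjacency of the expansion of
`H₃`).  Then for each vertex `a ∈ V(G) − V(H)` with `N_G(a) ∩ V(H) ≠ ∅` one of the
conclusions (i)–(iii) holds. -/
theorem stmt7 {V : Type*} [Fintype V] (G : SimpleGraph V) (hconn : G.Connected)
    (hK13 : ¬ ContainsInduced G K13) (hZ2 : ¬ ContainsInduced G (Zgraph 2))
    (hN : ¬ ContainsInduced G Ngraph)
    (u1 u2 u3 u4 u5 : V) (D6 : Set V)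
    (hus : List.Pairwise (· ≠ ·) [u1, u2, u3, u4, u5])
    (hne6 : D6.Nonempty)
    (hu1 : u1 ∉ D6) (hu2 : u2 ∉ D6) (hu3 : u3 ∉ D6) (hu4 : u4 ∉ D6) (hu5 : u5 ∉ D6)
    (hind : ∀ u ∈ ({u1, u2, u3, u4, u5} ∪ D6 : Set V),
      ∀ v ∈ ({u1, u2, u3, u4, u5} ∪ D6 : Set V), u ≠ v →
      (G.Adj u v ↔
        (u = u1 ∧ v = u2) ∨ (v = u1 ∧ u = u2) ∨
        (u = u1 ∧ v = u3) ∨ (v = u1 ∧ u = u3) ∨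
        (u = u2 ∧ v = u4) ∨ (v = u2 ∧ u = u4) ∨
        (u = u2 ∧ v ∈ D6) ∨ (v = u2 ∧ u ∈ D6) ∨
        (u = u3 ∧ v = u5) ∨ (v = u3 ∧ u = u5) ∨
        (u = u3 ∧ v ∈ D6) ∨ (v = u3 ∧ u ∈ D6) ∨
        (u = u4 ∧ v ∈ D6) ∨ (v = u4 ∧ u ∈ D6) ∨
        (u = u5 ∧ v ∈ D6) ∨ (v = u5 ∧ u ∈ D6) ∨
        (u ∈ D6 ∧ v ∈ D6)))
    (a : V) (ha : a ∉ ({u1, u2, u3, u4, u5} ∪ D6 : Set V))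
    (hnbr : ∃ b ∈ ({u1, u2, u3, u4, u5} ∪ D6 : Set V), G.Adj a b) :
    -- (i)
    IsExpansionOf (G.induce (({u1, u2, u3, u4, u5} ∪ D6 : Set V) ∪ {a})) HGraph3 {5} ∨
    -- (ii), i = 2
    ((∀ x ∈ ({u1, u2, u3, u4, u5} ∪ D6 : Set V), G.Adj a x ↔ (x = u1 ∨ x = u2 ∨ x = u5)) ∧
      (∃ c, D6 = {c}) ∧
      Nonempty ((G.induce (({u1, u2, u3, u4, u5} ∪ D6 : Set V) ∪ {a})) ≃g HGraph6)) ∨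
    -- (ii), i = 3
    ((∀ x ∈ ({u1, u2, u3, u4, u5} ∪ D6 : Set V), G.Adj a x ↔ (x = u1 ∨ x = u3 ∨ x = u4)) ∧
      (∃ c, D6 = {c}) ∧
      Nonempty ((G.induce (({u1, u2, u3, u4, u5} ∪ D6 : Set V) ∪ {a})) ≃g HGraph6)) ∨
    -- (iii)
    ((∀ x ∈ ({u1, u2, u3, u4, u5} ∪ D6 : Set V), G.Adj a x ↔ (x = u4 ∨ x = u5)) ∧
      IsExpansionOf (G.induce (({u1, u2, u3, u4, u5} ∪ D6 : Set V) ∪ {a})) HGraph5 {6}) :=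
  stmt7_general G hK13 hZ2 u1 u2 u3 u4 u5 D6 hus hne6 hu1 hu2 hu3 hu4 hu5 hind a ha hnbr
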